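/- No escape from ℛ on the relevant timescale: for the periodic SPM at L=L_c=⌊e^{β/2}⌋ and β sufficiently large, sup_{σ∈𝒢} ℙ_σ[τ_{ℛ^c} < β²e^{4β}] ≤ C·e^{-β/4} for some constant C; equivalently, with 𝓛_ℛ the principal submatrix of the generator 𝓛 indexed by ℛ (the killed generator), sup_{σ∈𝒢} (1 − (e^{t𝓛_ℛ}𝟙)(σ)) ≤ C·e^{-β/4} for t=β²e^{4β}. -/

import Mathlib

open scoped BigOperators

attribute [local instance] Classical.propDecidable

noncomputable section

namespace SPMP

/-- Spin configurations on the `L × L` torus; `true` codes spin `+1`. -/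
abbrev ConfigP (L : ℕ) := Fin L × Fin L → Bool

/-- The real spin value of a Boolean spin. -/
def sval (b : Bool) : ℝ := if b then 1 else -1

/-- Cyclic successor on `Fin L`. -/
def fsucc {L : ℕ} (i : Fin L) : Fin L := ⟨(i.val + 1) % L, Nat.mod_lt _ i.pos⟩

/-- The periodic plaquette variable
`p_x(σ) = σ_{(x₁,x₂)} σ_{(x₁+1,x₂)} σ_{(x₁,x₂+1)} σ_{(x₁+1,x₂+1)}` (coordinates mod `L`). -/
def plaqP (L : ℕ) (σ : ConfigP L) (x : Fin L × Fin L) : ℝ :=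
  sval (σ x) * sval (σ (fsucc x.1, x.2)) * sval (σ (x.1, fsucc x.2)) *
    sval (σ (fsucc x.1, fsucc x.2))

/-- The periodic Hamiltonian `H(σ) = -(1/2) ∑_x p_x(σ)`. -/
def hamP (L : ℕ) (σ : ConfigP L) : ℝ := -(1 / 2) * ∑ x : Fin L × Fin L, plaqP L σ x

/-- The Gibbs measure `π(σ) = e^{-βH(σ)}/Z`. -/
def gibbsP (L : ℕ) (β : ℝ) (σ : ConfigP L) : ℝ :=
  Real.exp (-β * hamP L σ) / ∑ η : ConfigP L, Real.exp (-β * hamP L η)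

/-- Flip one spin. -/
def flipP (L : ℕ) (σ : ConfigP L) (x : Fin L × Fin L) : ConfigP L :=
  fun i => if i = x then !(σ i) else σ i

/-- Metropolis rate of the move `σ → η`: `min(1, e^{-β(H(η)-H(σ))})`. -/
def metroRateP (L : ℕ) (β : ℝ) (σ η : ConfigP L) : ℝ :=
  min 1 (Real.exp (-β * (hamP L η - hamP L σ)))

/-- The Glauber generator of the periodic dynamics, as a matrix. -/
def genP (L : ℕ) (β : ℝ) : Matrix (ConfigP L) (ConfigP L) ℝ :=
  fun σ η =>
    if η = σ then -(∑ x : Fin L × Fin L, metroRateP L β σ (flipP L σ x))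
    else ∑ x : Fin L × Fin L, if η = flipP L σ x then metroRateP L β σ (flipP L σ x) else 0

/-- Entrywise matrix exponential `∑ₖ Aᵏ/k!`. -/
def mexp {n : Type*} [Fintype n] [DecidableEq n] (A : Matrix n n ℝ) : Matrix n n ℝ :=
  fun i j => ∑' k : ℕ, (A ^ k) i j / (Nat.factorial k : ℝ)

/-- Total-variation distance between two (probability) vectors. -/
def tv {n : Type*} [Fintype n] (μ ν : n → ℝ) : ℝ := (∑ s, |μ s - ν s|) / 2

/-- The `ε`-mixing time of the periodic Glauber dynamics. -/
def tmixP (L : ℕ) (β ε : ℝ) : ℝ :=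
  sInf {t : ℝ | 0 < t ∧ ∀ σ : ConfigP L, tv (mexp (t • genP L β) σ) (gibbsP L β) < ε}

/-- The set of ground states: minimizers of the Hamiltonian. -/
def GroundP (L : ℕ) : Set (ConfigP L) := {σ | ∀ η : ConfigP L, hamP L σ ≤ hamP L η}

/-- The critical length scale `L_c = ⌊e^{β/2}⌋`. -/
def Lc (β : ℝ) : ℕ := ⌊Real.exp (β / 2)⌋₊

end SPMP

namespace SPMP

/-- Flip a cyclic segment of length `k` of row `r`, starting at position `m`. -/
def flipRowSeg (L : ℕ) (σ : ConfigP L) (r m : Fin L) (k : ℕ) : ConfigP L :=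
  fun z => if z.2 = r ∧ ∃ t : ℕ, t < k ∧ z.1.val = (m.val + t) % L then !(σ z) else σ z

/-- Flip a cyclic segment of length `k` of column `c`, starting at position `m`. -/
def flipColSeg (L : ℕ) (σ : ConfigP L) (c m : Fin L) (k : ℕ) : ConfigP L :=
  fun z => if z.1 = c ∧ ∃ t : ℕ, t < k ∧ z.2.val = (m.val + t) % L then !(σ z) else σ z

/-- `ℛ_k`: the configurations `R(σ,η,m,k)` obtained from a ground state by flipping a cyclic
segment of length `k` of a single row or column (the configurations at step `k` of the
minimal-length, minimal-energy paths between ground states, Definition `DefMinEnMinLPaths`). -/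
def Rk (L k : ℕ) : Set (ConfigP L) :=
  {ζ | ∃ σ ∈ GroundP L, ∃ i m : Fin L,
    ζ = flipRowSeg L σ i m k ∨ ζ = flipColSeg L σ i m k}

/-- `ℛ = ∪_{k=0}^{L} ℛ_k`. -/
def Rset (L : ℕ) : Set (ConfigP L) := {ζ | ∃ k ≤ L, ζ ∈ Rk L k}

/-- `ℛ_init = ℛ₁ ∪ ℛ_{L-1}`: configurations one spin flip away from a ground state. -/
def Rinit (L : ℕ) : Set (ConfigP L) := Rk L 1 ∪ Rk L (L - 1)

/-- `ℛ' = ℛ \ (𝒢 ∪ ℛ_init)`. -/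
def Rmid (L : ℕ) : Set (ConfigP L) := Rset L \ (GroundP L ∪ Rinit L)

end SPMP

namespace SPMP

/-- The killed generator `𝓛_ℛ` (the principal submatrix of `𝓛` on `ℛ`, extended by zero). -/
def killedGen (L : ℕ) (β : ℝ) : Matrix (ConfigP L) (ConfigP L) ℝ :=
  fun σ η => if σ ∈ Rset L ∧ η ∈ Rset L then genP L β σ η else 0

end SPMP

namespace SPMP

/-! ### Cyclic arithmetic -/

/-- Cyclic predecessor on `Fin L`. -/
def fpred {L : ℕ} (i : Fin L) : Fin L :=
  ⟨if i.val = 0 then L - 1 else i.val - 1, by have := i.isLt; split <;> omega⟩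

/-- Cyclic offset of `a` from `m`. -/
def offset {L : ℕ} (m a : Fin L) : ℕ :=
  if m.val ≤ a.val then a.val - m.val else a.val + L - m.val

lemma fsucc_val {L : ℕ} (i : Fin L) :
    (fsucc i).val = if i.val + 1 = L then 0 else i.val + 1 := by
  have := i.isLt
  unfold fsucc
  split_ifs with h
  · simp [h]
  · exact Nat.mod_eq_of_lt (by omega)

lemma fpred_val {L : ℕ} (i : Fin L) :
    (fpred i).val = if i.val = 0 then L - 1 else i.val - 1 := rfl

lemma fsucc_eq_iff {L : ℕ} (i j : Fin L) : fsucc i = j ↔ i = fpred j := by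
  have := i.isLt
  have := j.isLt
  rw [Fin.ext_iff, Fin.ext_iff, fsucc_val, fpred_val]
  split_ifs <;> omega

lemma fsucc_fpred {L : ℕ} (i : Fin L) : fsucc (fpred i) = i := (fsucc_eq_iff _ _).2 rfl

lemma fpred_fsucc {L : ℕ} (i : Fin L) : fpred (fsucc i) = i := ((fsucc_eq_iff _ _).1 rfl).symm

lemma fsucc_ne {L : ℕ} (hL : 2 ≤ L) (i : Fin L) : fsucc i ≠ i := by
  have := i.isLt
  rw [Ne, Fin.ext_iff, fsucc_val]
  split_ifs <;> omega

lemma fpred_ne {L : ℕ} (hL : 2 ≤ L) (i : Fin L) : fpred i ≠ i := by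
  have := i.isLt
  rw [Ne, Fin.ext_iff, fpred_val]
  split_ifs <;> omega

lemma fsucc_ne_fpred {L : ℕ} (hL : 3 ≤ L) (i : Fin L) : fsucc i ≠ fpred i := by
  have := i.isLt
  rw [Ne, Fin.ext_iff, fsucc_val, fpred_val]
  split_ifs <;> omega

lemma offset_lt {L : ℕ} (m a : Fin L) : offset m a < L := by
  have := m.isLt
  have := a.isLt
  unfold offset
  split_ifs <;> omega

lemma offset_inj {L : ℕ} {m a b : Fin L} : offset m a = offset m b ↔ a = b := by
  have := m.isLt
  have := a.isLt
  have := b.isLt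
  rw [Fin.ext_iff]
  unfold offset
  split_ifs <;> omega

lemma exists_offset_eq {L : ℕ} (m : Fin L) {j : ℕ} (hj : j < L) : ∃ a, offset m a = j := by
  have := m.isLt
  by_cases h : m.val + j < L
  · refine ⟨⟨m.val + j, h⟩, ?_⟩
    simp [offset]
  · refine ⟨⟨m.val + j - L, by omega⟩, ?_⟩
    simp only [offset]
    split_ifs <;> omega

lemma offset_self {L : ℕ} (m : Fin L) : offset m m = 0 := by simp [offset]

lemma offset_fsucc {L : ℕ} (m a : Fin L) :
    offset m (fsucc a) = if offset m a + 1 = L then 0 else offset m a + 1 := by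
  have := m.isLt
  have := a.isLt
  unfold offset
  rw [fsucc_val]
  split_ifs <;> omega

lemma offset_fpred {L : ℕ} (m a : Fin L) :
    offset m (fpred a) = if offset m a = 0 then L - 1 else offset m a - 1 := by
  have := m.isLt
  have := a.isLt
  unfold offset
  rw [fpred_val]
  split_ifs <;> omega

lemma offset_fsucc_left {L : ℕ} (m a : Fin L) :
    offset (fsucc m) a = if offset m a = 0 then L - 1 else offset m a - 1 := by
  have := m.isLt
  have := a.isLt
  unfold offset
  rw [fsucc_val]
  split_ifs <;> omega

lemma offset_fpred_left {L : ℕ} (m a : Fin L) :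
    offset (fpred m) a = if offset m a + 1 = L then 0 else offset m a + 1 := by
  have := m.isLt
  have := a.isLt
  unfold offset
  rw [fpred_val]
  split_ifs <;> omega

lemma mem_segment_iff {L k : ℕ} (hk : k ≤ L) (m a : Fin L) :
    (∃ t : ℕ, t < k ∧ a.val = (m.val + t) % L) ↔ offset m a < k := by
  have hm := m.isLt
  have ha := a.isLt
  constructor
  · rintro ⟨t, ht, h⟩
    by_cases hc : m.val + t < L
    · rw [Nat.mod_eq_of_lt hc] at h
      unfold offset
      split_ifs <;> omega
    · rw [Nat.mod_eq_sub_mod (by omega), Nat.mod_eq_of_lt (by omega)] at h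
      unfold offset
      split_ifs <;> omega
  · intro h
    refine ⟨offset m a, h, ?_⟩
    unfold offset
    split_ifs with hc
    · rw [Nat.mod_eq_of_lt (by omega)]
      omega
    · rw [Nat.mod_eq_sub_mod (by omega), Nat.mod_eq_of_lt (by omega)]
      omega

lemma flipRowSeg_apply {L k : ℕ} (hk : k ≤ L) (σ : ConfigP L) (r m : Fin L) (z : Fin L × Fin L) :
    flipRowSeg L σ r m k z = if z.2 = r ∧ offset m z.1 < k then !(σ z) else σ z := by
  unfold flipRowSeg
  simp only [mem_segment_iff hk]

/-! ### Energies -/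

/-- The sign `-1` of a true proposition, `1` of a false one. -/
def flipSign (P : Prop) : ℝ := if P then -1 else 1

lemma flipSign_mul_self (P : Prop) : flipSign P * flipSign P = 1 := by
  unfold flipSign
  split_ifs <;> norm_num

lemma sval_ite_not (P : Prop) [Decidable P] (b : Bool) :
    sval (if P then !b else b) = flipSign P * sval b := by
  unfold flipSign sval
  by_cases hP : P <;> cases b <;> simp [hP]

lemma plaqP_ite_not {L : ℕ} (σ : ConfigP L) (P : Fin L × Fin L → Prop) [DecidablePred P]
    (x : Fin L × Fin L) :
    plaqP L (fun z => if P z then !(σ z) else σ z) x =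
      flipSign (P x) * flipSign (P (fsucc x.1, x.2)) * flipSign (P (x.1, fsucc x.2)) *
        flipSign (P (fsucc x.1, fsucc x.2)) * plaqP L σ x := by
  unfold plaqP
  simp only [sval_ite_not]
  ring

lemma plaqP_le_one {L : ℕ} (σ : ConfigP L) (x : Fin L × Fin L) : plaqP L σ x ≤ 1 := by
  have h : ∀ b : Bool, sval b = 1 ∨ sval b = -1 := by
    intro b
    cases b <;> simp [sval]
  unfold plaqP
  rcases h (σ x) with h1 | h1 <;> rcases h (σ (fsucc x.1, x.2)) with h2 | h2 <;>
    rcases h (σ (x.1, fsucc x.2)) with h3 | h3 <;>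
    rcases h (σ (fsucc x.1, fsucc x.2)) with h4 | h4 <;> rw [h1, h2, h3, h4] <;> norm_num

lemma mem_GroundP_iff {L : ℕ} (σ : ConfigP L) : σ ∈ GroundP L ↔ ∀ x, plaqP L σ x = 1 := by
  constructor
  · intro h
    have h1 := h (fun _ => true)
    have hc : ∀ x, plaqP L (fun _ => true) x = 1 := by
      intro x
      simp [plaqP, sval]
    unfold hamP at h1
    simp only [hc] at h1
    have h2 : ∑ x, plaqP L σ x = ∑ _x : Fin L × Fin L, (1 : ℝ) :=
      le_antisymm (Finset.sum_le_sum fun x _ => plaqP_le_one σ x) (by linarith)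
    have h3 := (Finset.sum_eq_sum_iff_of_le fun x _ => plaqP_le_one σ x).1 h2
    exact fun x => h3 x (Finset.mem_univ x)
  · intro h η
    unfold hamP
    simp only [h]
    have := Finset.sum_le_sum fun x (_ : x ∈ Finset.univ) => plaqP_le_one η x
    linarith

lemma plaqP_flipP {L : ℕ} (hL : 2 ≤ L) (ζ : ConfigP L) (y x : Fin L × Fin L) :
    plaqP L (flipP L ζ y) x = plaqP L ζ x -
      2 * (((if x.1 = y.1 then 1 else 0) + (if x.1 = fpred y.1 then 1 else 0)) *
        (((if x.2 = y.2 then 1 else 0) + (if x.2 = fpred y.2 then 1 else 0)) * plaqP L ζ x)) := by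
  have h := plaqP_ite_not ζ (fun z => z = y) x
  change plaqP L (flipP L ζ y) x = _ at h
  rw [h]
  obtain ⟨a, b⟩ := y
  obtain ⟨c, d⟩ := x
  simp only [Prod.mk.injEq, fsucc_eq_iff, flipSign]
  have h1 := fpred_ne hL a
  have h2 := fpred_ne hL b
  by_cases e1 : c = a
  · by_cases e2 : d = b
    · subst e1 e2
      simp [h1.symm, h2.symm]
      ring
    · subst e1
      by_cases e3 : d = fpred b
      · simp [h1.symm, e3, h2]
        ring
      · simp [h1.symm, e2, e3]
  · by_cases e4 : c = fpred a
    · by_cases e2 : d = b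
      · subst e2
        simp [e4, h1, h2.symm]
        ring
      · by_cases e3 : d = fpred b
        · simp [e4, h1, h2, e3]
          ring
        · simp [e4, h1, e2, e3]
    · simp [e1, e4]

/-- A spin flip changes the energy by the sum of the four plaquettes containing it. -/
lemma hamP_flipP_sub {L : ℕ} (hL : 2 ≤ L) (ζ : ConfigP L) (a b : Fin L) :
    hamP L (flipP L ζ (a, b)) - hamP L ζ =
      plaqP L ζ (a, b) + plaqP L ζ (a, fpred b) + plaqP L ζ (fpred a, b) +
        plaqP L ζ (fpred a, fpred b) := by
  unfold hamP
  simp only [plaqP_flipP hL, Finset.sum_sub_distrib, ← Finset.mul_sum, Fintype.sum_prod_type,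
    add_mul, ite_mul, one_mul, zero_mul, Finset.sum_add_distrib]
  simp only [Finset.sum_ite_irrel, Finset.sum_ite_eq', Finset.sum_add_distrib,
    Finset.sum_const_zero, Finset.mem_univ, if_true]
  ring

lemma flipP_flipP {L : ℕ} (ζ : ConfigP L) (y : Fin L × Fin L) : flipP L (flipP L ζ y) y = ζ := by
  funext z
  by_cases h : z = y <;> simp [flipP, h]

lemma flipP_ne {L : ℕ} (ζ : ConfigP L) (y : Fin L × Fin L) : flipP L ζ y ≠ ζ := by
  intro h
  have := congrFun h y
  simp [flipP] at this

lemma hamP_flipP_ground {L : ℕ} (hL : 2 ≤ L) {σ : ConfigP L} (hσ : σ ∈ GroundP L)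
    (y : Fin L × Fin L) : hamP L (flipP L σ y) - hamP L σ = 4 := by
  rw [mem_GroundP_iff] at hσ
  rw [hamP_flipP_sub hL]
  simp only [hσ]
  norm_num

/-! ### Transposition -/

/-- Exchange of rows and columns. -/
def transposeP {L : ℕ} (σ : ConfigP L) : ConfigP L := fun z => σ z.swap

lemma transposeP_transposeP {L : ℕ} (σ : ConfigP L) : transposeP (transposeP σ) = σ := rfl

lemma plaqP_transposeP {L : ℕ} (σ : ConfigP L) (x : Fin L × Fin L) :
    plaqP L (transposeP σ) x = plaqP L σ x.swap := by
  simp only [plaqP, transposeP, Prod.swap]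
  ring

lemma hamP_transposeP {L : ℕ} (σ : ConfigP L) : hamP L (transposeP σ) = hamP L σ := by
  simp only [hamP, plaqP_transposeP]
  congr 1
  exact (Equiv.prodComm (Fin L) (Fin L)).sum_comp (plaqP L σ)

lemma flipP_transposeP {L : ℕ} (σ : ConfigP L) (y : Fin L × Fin L) :
    flipP L (transposeP σ) y = transposeP (flipP L σ y.swap) := by
  funext z
  simp only [flipP, transposeP, Prod.swap_inj]

lemma transposeP_mem_GroundP {L : ℕ} {σ : ConfigP L} (hσ : σ ∈ GroundP L) :
    transposeP σ ∈ GroundP L := by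
  rw [mem_GroundP_iff] at *
  intro x
  rw [plaqP_transposeP, hσ]

lemma transposeP_flipRowSeg {L : ℕ} (σ : ConfigP L) (r m : Fin L) (k : ℕ) :
    transposeP (flipRowSeg L σ r m k) = flipColSeg L (transposeP σ) r m k := rfl

lemma transposeP_flipColSeg {L : ℕ} (σ : ConfigP L) (r m : Fin L) (k : ℕ) :
    transposeP (flipColSeg L σ r m k) = flipRowSeg L (transposeP σ) r m k := rfl

lemma transposeP_mem_Rk {L k : ℕ} {ζ : ConfigP L} (h : ζ ∈ Rk L k) : transposeP ζ ∈ Rk L k := by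
  obtain ⟨σ, hσ, i, m, rfl | rfl⟩ := h
  · exact ⟨_, transposeP_mem_GroundP hσ, i, m, Or.inr (transposeP_flipRowSeg _ _ _ _)⟩
  · exact ⟨_, transposeP_mem_GroundP hσ, i, m, Or.inl (transposeP_flipColSeg _ _ _ _)⟩

/-! ### Local moves inside `ℛ` -/

lemma flipRowSeg_full_mem_GroundP {L : ℕ} {σ : ConfigP L} (hσ : σ ∈ GroundP L)
    (r m : Fin L) : flipRowSeg L σ r m L ∈ GroundP L := by
  have he : flipRowSeg L σ r m L = fun z => if z.2 = r then !(σ z) else σ z := by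
    funext z
    simp [flipRowSeg_apply le_rfl, offset_lt]
  rw [mem_GroundP_iff] at *
  intro x
  rw [he, plaqP_ite_not, hσ]
  have h1 := flipSign_mul_self (x.2 = r)
  have h2 := flipSign_mul_self (fsucc x.2 = r)
  calc _ = (flipSign (x.2 = r) * flipSign (x.2 = r)) *
        (flipSign (fsucc x.2 = r) * flipSign (fsucc x.2 = r)) := by ring
    _ = 1 := by rw [h1, h2, one_mul]

lemma flipRowSeg_zero {L : ℕ} (σ : ConfigP L) (r m : Fin L) : flipRowSeg L σ r m 0 = σ := by
  funext z
  simp [flipRowSeg]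

lemma flipRowSeg_one {L : ℕ} (σ : ConfigP L) (r m : Fin L) :
    flipRowSeg L σ r m 1 = flipP L σ (m, r) := by
  have := m.isLt
  funext z
  have h : offset m z.1 < 1 ↔ z.1 = m := by
    rw [Nat.lt_one_iff, ← offset_self m, offset_inj]
  simp only [flipRowSeg_apply (show 1 ≤ L by omega), h, flipP, Prod.ext_iff, and_comm]

lemma flipColSeg_one {L : ℕ} (σ : ConfigP L) (c m : Fin L) :
    flipColSeg L σ c m 1 = flipP L σ (c, m) := by
  have h := congrArg transposeP (flipRowSeg_one (transposeP σ) c m)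
  rw [flipP_transposeP] at h
  exact h

lemma Rk_zero_iff {L : ℕ} (hL : 0 < L) {ζ : ConfigP L} : ζ ∈ Rk L 0 ↔ ζ ∈ GroundP L := by
  constructor
  · rintro ⟨σ, hσ, i, m, rfl | rfl⟩
    · rwa [flipRowSeg_zero]
    · rw [← transposeP_transposeP σ, ← transposeP_flipRowSeg, flipRowSeg_zero]
      exact hσ
  · intro h
    exact ⟨ζ, h, ⟨0, hL⟩, ⟨0, hL⟩, Or.inl (flipRowSeg_zero _ _ _).symm⟩

lemma Rk_one_iff {L : ℕ} {ζ : ConfigP L} :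
    ζ ∈ Rk L 1 ↔ ∃ σ ∈ GroundP L, ∃ y, ζ = flipP L σ y := by
  constructor
  · rintro ⟨σ, hσ, i, m, rfl | rfl⟩
    · exact ⟨σ, hσ, _, flipRowSeg_one _ _ _⟩
    · exact ⟨σ, hσ, _, flipColSeg_one _ _ _⟩
  · rintro ⟨σ, hσ, y, rfl⟩
    exact ⟨σ, hσ, y.2, y.1, Or.inl (flipRowSeg_one _ _ _).symm⟩

lemma Rk_full_subset {L : ℕ} (hL : 0 < L) : Rk L L ⊆ Rk L 0 := by
  rintro ζ ⟨σ, hσ, i, m, rfl | rfl⟩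
  · exact (Rk_zero_iff hL).2 (flipRowSeg_full_mem_GroundP hσ i m)
  · rw [← transposeP_transposeP σ, ← transposeP_flipRowSeg]
    exact (Rk_zero_iff hL).2 (transposeP_mem_GroundP
      (flipRowSeg_full_mem_GroundP (transposeP_mem_GroundP hσ) i m))

lemma flipRowSeg_pred_full {L : ℕ} (σ : ConfigP L) (r m : Fin L) :
    flipRowSeg L σ r m (L - 1) = flipP L (flipRowSeg L σ r m L) (fpred m, r) := by
  have hm := m.isLt
  funext ⟨a, b⟩
  have ha := offset_lt m a
  have h : a = fpred m ↔ offset m a = L - 1 := by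
    rw [← offset_inj (m := m), offset_fpred, offset_self, if_pos rfl]
  simp only [flipP, flipRowSeg_apply le_rfl, flipRowSeg_apply (Nat.sub_le L 1), Prod.mk.injEq, h]
  by_cases hb : b = r
  · by_cases ho : offset m a = L - 1
    · simp [hb, ho, show L - 1 < L by omega]
    · simp [hb, ho, ha, show offset m a < L - 1 by omega]
  · simp [hb]

lemma Rk_pred_full_subset {L : ℕ} : Rk L (L - 1) ⊆ Rk L 1 := by
  rintro ζ ⟨σ, hσ, i, m, rfl | rfl⟩
  · rw [flipRowSeg_pred_full]
    exact Rk_one_iff.2 ⟨_, flipRowSeg_full_mem_GroundP hσ i m, _, rfl⟩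
  · rw [← transposeP_transposeP σ, ← transposeP_flipRowSeg, flipRowSeg_pred_full]
    exact transposeP_mem_Rk (Rk_one_iff.2
      ⟨_, flipRowSeg_full_mem_GroundP (transposeP_mem_GroundP hσ) i m, _, rfl⟩)

/-- Control of the single spin flips from `ζ ∈ ℛ_k`: at most `u` of them lead to `ℛ_{k+1}`, at
least `d` of them lead to `ℛ_{k-1}` without raising the energy, and all others raise the energy
by at least `4`, up to eight exceptions that raise it by at least `2`. -/
def LocalMoves (L : ℕ) (ζ : ConfigP L) (k u d : ℕ) : Prop :=
  ∃ U D B : Finset (Fin L × Fin L), Disjoint U D ∧ U.card ≤ u ∧ d ≤ D.card ∧ B.card ≤ 8 ∧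
    (∀ y ∈ U, flipP L ζ y ∈ Rk L (k + 1)) ∧
    (∀ y ∈ D, flipP L ζ y ∈ Rk L (k - 1) ∧ hamP L (flipP L ζ y) - hamP L ζ ≤ 0) ∧
    (∀ y, y ∉ U → y ∉ D → 2 ≤ hamP L (flipP L ζ y) - hamP L ζ) ∧
    (∀ y, y ∉ U → y ∉ D → y ∉ B → 4 ≤ hamP L (flipP L ζ y) - hamP L ζ)

lemma LocalMoves.transposeP {L : ℕ} {ζ : ConfigP L} {k u d : ℕ} (h : LocalMoves L ζ k u d) :
    LocalMoves L (transposeP ζ) k u d := by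
  obtain ⟨U, D, B, hUD, hU, hD, hB, h1, h2, h3, h4⟩ := h
  have hmem : ∀ (S : Finset (Fin L × Fin L)) (y : Fin L × Fin L),
      y ∈ S.map (Equiv.prodComm _ _).toEmbedding ↔ y.swap ∈ S := by
    rintro S ⟨a, b⟩
    simp
  refine ⟨U.map (Equiv.prodComm _ _).toEmbedding, D.map (Equiv.prodComm _ _).toEmbedding,
    B.map (Equiv.prodComm _ _).toEmbedding, (Finset.disjoint_map _).2 hUD, by simpa, by simpa,
    by simpa, ?_, ?_, ?_, ?_⟩
  · intro y hy
    rw [flipP_transposeP]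
    exact transposeP_mem_Rk (h1 _ ((hmem _ _).1 hy))
  · intro y hy
    rw [flipP_transposeP, hamP_transposeP, hamP_transposeP]
    exact ⟨transposeP_mem_Rk (h2 _ ((hmem _ _).1 hy)).1, (h2 _ ((hmem _ _).1 hy)).2⟩
  · intro y hyU hyD
    rw [hmem] at hyU hyD
    rw [flipP_transposeP, hamP_transposeP, hamP_transposeP]
    exact h3 _ hyU hyD
  · intro y hyU hyD hyB
    rw [hmem] at hyU hyD hyB
    rw [flipP_transposeP, hamP_transposeP, hamP_transposeP]
    exact h4 _ hyU hyD hyB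

/-- The plaquettes of a ground state with a segment of row `r` flipped. -/
lemma plaqP_flipRowSeg {L k : ℕ} (hL : 2 ≤ L) (hk1 : 1 ≤ k) (hk : k < L) {σ : ConfigP L}
    (hσ : σ ∈ GroundP L) (r m a b : Fin L) :
    plaqP L (flipRowSeg L σ r m k) (a, b) =
      if (b = r ∨ b = fpred r) ∧ (offset m a + 1 = k ∨ offset m a + 1 = L) then -1 else 1 := by
  have he : flipRowSeg L σ r m k =
      fun z => if z.2 = r ∧ offset m z.1 < k then !(σ z) else σ z :=
    funext fun z => flipRowSeg_apply hk.le σ r m z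
  rw [mem_GroundP_iff] at hσ
  rw [he, plaqP_ite_not σ (fun z => z.2 = r ∧ offset m z.1 < k), hσ]
  simp only [offset_fsucc, fsucc_eq_iff, flipSign]
  have ho := offset_lt m a
  have hr := fpred_ne hL r
  have key : (if offset m a < k then (-1 : ℝ) else 1) *
      (if (if offset m a + 1 = L then 0 else offset m a + 1) < k then (-1 : ℝ) else 1) =
      if offset m a + 1 = k ∨ offset m a + 1 = L then -1 else 1 := by
    split_ifs <;> first | omega | norm_num
  by_cases h1 : b = r
  · subst h1
    simp only [true_and, hr.symm, false_and, if_false, mul_one, or_false]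
    exact key
  · by_cases h2 : b = fpred r
    · subst h2
      simp only [true_and, hr, false_and, if_false, mul_one, one_mul, or_true]
      exact key
    · simp [h1, h2]

/-- The energy cost of a spin flip, from a ground state with a segment of row `r` flipped. -/
lemma hamP_flipP_flipRowSeg {L k : ℕ} (hL : 3 ≤ L) (hk1 : 1 ≤ k) (hk : k < L) {σ : ConfigP L}
    (hσ : σ ∈ GroundP L) (r m a b : Fin L) {q : ℝ}
    (hq : q = (if offset m a + 1 = k ∨ offset m a + 1 = L then -1 else 1) +
      (if offset m a = k ∨ offset m a = 0 then -1 else 1)) :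
    hamP L (flipP L (flipRowSeg L σ r m k) (a, b)) - hamP L (flipRowSeg L σ r m k) =
      if b = r then 2 * q else if b = fsucc r ∨ b = fpred r then q + 2 else 4 := by
  have ho := offset_lt m a
  rw [hamP_flipP_sub (by omega)]
  simp only [plaqP_flipRowSeg (show 2 ≤ L by omega) hk1 hk hσ, offset_fpred]
  have e : ((if offset m a = 0 then L - 1 else offset m a - 1) + 1 = k ∨
      (if offset m a = 0 then L - 1 else offset m a - 1) + 1 = L) ↔
      (offset m a = k ∨ offset m a = 0) := by
    split_ifs <;> omega
  simp only [e]
  have hr := fpred_ne (show 2 ≤ L by omega) r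
  have hr' := fsucc_ne (show 2 ≤ L by omega) r
  have hr2 := fsucc_ne_fpred hL r
  have hpp : fpred (fpred r) ≠ r := by
    intro h
    exact hr2 ((fsucc_eq_iff _ _).2 h.symm)
  by_cases h1 : b = r
  · subst h1
    simp only [hr, true_or, or_true, true_and, if_true]
    rw [hq]
    ring
  · by_cases h2 : b = fsucc r
    · subst h2
      simp only [fpred_fsucc, hr', hr2, true_or, or_self, true_and, false_and, if_true, if_false]
      rw [hq]
      ring
    · by_cases h3 : b = fpred r
      · subst h3
        simp only [hpp, hr, fpred_ne (show 2 ≤ L by omega) (fpred r), or_true, or_self, true_and,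
          false_and, if_true, if_false]
        rw [hq]
        ring
      · have h4 : fpred b ≠ r := fun h => h2 (by rw [← h, fsucc_fpred])
        have h5 : fpred b ≠ fpred r := fun h => h1 (by rw [← fsucc_fpred b, h, fsucc_fpred])
        simp only [h1, h2, h3, h4, h5, or_self, false_and, if_false]
        norm_num

lemma flipP_flipRowSeg_eq {L k k' : ℕ} (hk : k ≤ L) (hk' : k' ≤ L) (σ : ConfigP L)
    (r m m' a : Fin L)
    (h : ∀ z, offset m' z < k' ↔ ((z = a ∧ ¬ offset m z < k) ∨ (z ≠ a ∧ offset m z < k))) :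
    flipP L (flipRowSeg L σ r m k) (a, r) = flipRowSeg L σ r m' k' := by
  funext ⟨z, b⟩
  simp only [flipP, flipRowSeg_apply hk, flipRowSeg_apply hk', h, Prod.mk.injEq]
  by_cases h1 : b = r
  · by_cases h2 : z = a
    · subst h2
      by_cases h3 : offset m z < k <;> simp only [h1, h3] <;> simp
    · by_cases h3 : offset m z < k <;> simp [h1, h2, h3]
  · simp [h1]

/-- Local moves from the bulk of `ℛ`. -/
lemma localMoves_flipRowSeg {L k : ℕ} (hk2 : 2 ≤ k) (hk : k + 2 ≤ L) {σ : ConfigP L}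
    (hσ : σ ∈ GroundP L) (r m : Fin L) : LocalMoves L (flipRowSeg L σ r m k) k 2 2 := by
  obtain ⟨a, ha⟩ := exists_offset_eq m (show k < L by omega)
  obtain ⟨b, hb⟩ := exists_offset_eq m (show k - 1 < L by omega)
  obtain ⟨c, hc⟩ := exists_offset_eq m (show L - 1 < L by omega)
  have hm := offset_self m
  have ea : ∀ z, z = a ↔ offset m z = k := fun z => by rw [← ha, offset_inj]
  have eb : ∀ z, z = b ↔ offset m z = k - 1 := fun z => by rw [← hb, offset_inj]
  have ec : ∀ z, z = c ↔ offset m z = L - 1 := fun z => by rw [← hc, offset_inj]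
  have em : ∀ z, z = m ↔ offset m z = 0 := fun z => by rw [← hm, offset_inj]
  have H := fun x y => hamP_flipP_flipRowSeg (show 3 ≤ L by omega) (show 1 ≤ k by omega)
    (show k < L by omega) hσ r m x y rfl
  refine ⟨{(a, r), (c, r)}, {(b, r), (m, r)},
    {a, b, c, m} ×ˢ {fsucc r, fpred r}, ?_, Finset.card_le_two, ?_, ?_, ?_, ?_, ?_, ?_⟩
  · rw [Finset.disjoint_left]
    rintro ⟨x, y⟩ hx hy
    simp only [Finset.mem_insert, Finset.mem_singleton, Prod.mk.injEq, ea, eb, ec, em] at hx hy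
    omega
  · rw [Finset.card_pair]
    intro h
    have : b = m := congrArg Prod.fst h
    rw [em] at this
    omega
  · rw [Finset.card_product]
    exact Nat.mul_le_mul (Finset.card_le_four) (Finset.card_le_two)
  · intro y hy
    simp only [Finset.mem_insert, Finset.mem_singleton] at hy
    rcases hy with rfl | rfl
    · refine ⟨σ, hσ, r, m, Or.inl (flipP_flipRowSeg_eq (by omega) (by omega) σ r m m a ?_)⟩
      intro z
      rw [Ne, ea]
      omega
    · refine ⟨σ, hσ, r, fpred m,
        Or.inl (flipP_flipRowSeg_eq (by omega) (by omega) σ r m (fpred m) c ?_)⟩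
      intro z
      have := offset_lt m z
      rw [Ne, ec, offset_fpred_left]
      split_ifs <;> omega
  · intro y hy
    simp only [Finset.mem_insert, Finset.mem_singleton] at hy
    rcases hy with rfl | rfl
    · constructor
      · refine ⟨σ, hσ, r, m, Or.inl (flipP_flipRowSeg_eq (by omega) (by omega) σ r m m b ?_)⟩
        intro z
        rw [Ne, eb]
        omega
      · rw [H, if_pos rfl, if_pos (by omega), if_neg (by omega)]
        norm_num
    · constructor
      · refine ⟨σ, hσ, r, fsucc m,
          Or.inl (flipP_flipRowSeg_eq (by omega) (by omega) σ r m (fsucc m) m ?_)⟩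
        intro z
        have := offset_lt m z
        rw [Ne, em, offset_fsucc_left]
        split_ifs <;> omega
      · rw [H, if_pos rfl, if_neg (by omega), if_pos (by omega)]
        norm_num
  · rintro ⟨x, y⟩ hU hD
    simp only [Finset.mem_insert, Finset.mem_singleton, Prod.mk.injEq, ea, eb, ec, em] at hU hD
    rw [H]
    by_cases h1 : y = r
    · simp only [h1, and_true] at hU hD
      rw [if_pos h1, if_neg (by omega), if_neg (by omega)]
      norm_num
    · have hq : (0 : ℝ) ≤ (if offset m x + 1 = k ∨ offset m x + 1 = L then -1 else 1) +
          (if offset m x = k ∨ offset m x = 0 then -1 else 1) := by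
        by_cases h3 : offset m x + 1 = k ∨ offset m x + 1 = L
        · rw [if_pos h3, if_neg (by omega)]
          norm_num
        · rw [if_neg h3]
          split_ifs <;> norm_num
      rw [if_neg h1]
      split_ifs at hq ⊢ <;> linarith
  · rintro ⟨x, y⟩ hU hD hB
    simp only [Finset.mem_insert, Finset.mem_singleton, Finset.mem_product, Prod.mk.injEq, ea, eb,
      ec, em] at hU hD hB
    rw [H]
    by_cases h1 : y = r
    · simp only [h1, and_true] at hU hD
      rw [if_pos h1, if_neg (by omega), if_neg (by omega)]
      norm_num
    · rw [if_neg h1]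
      by_cases h2 : y = fsucc r ∨ y = fpred r
      · simp only [h2, and_true] at hB
        rw [if_pos h2, if_neg (by omega), if_neg (by omega)]
        norm_num
      · rw [if_neg h2]

/-- Local moves from a ground state with one flipped spin. -/
lemma localMoves_flipP {L : ℕ} (hL : 4 ≤ L) {σ : ConfigP L}
    (hσ : σ ∈ GroundP L) (m r : Fin L) : LocalMoves L (flipP L σ (m, r)) 1 4 1 := by
  have hm := offset_self m
  have hs : offset m (fsucc m) = 1 := by
    rw [offset_fsucc, hm]
    split_ifs <;> omega
  have hp : offset m (fpred m) = L - 1 := by rw [offset_fpred, hm, if_pos rfl]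
  have es : ∀ z, z = fsucc m ↔ offset m z = 1 := fun z => by rw [← hs, offset_inj]
  have ep : ∀ z, z = fpred m ↔ offset m z = L - 1 := fun z => by rw [← hp, offset_inj]
  have em : ∀ z, z = m ↔ offset m z = 0 := fun z => by rw [← hm, offset_inj]
  have hL1 : 1 ≤ L := by omega
  have hL2 : 2 ≤ L := by omega
  have hr := fsucc_ne hL2 r
  have hr2 := fpred_ne hL2 r
  have row : ∀ (τ : ConfigP L) (j i : Fin L),
      flipP L (flipP L τ (i, j)) (fsucc i, j) = flipRowSeg L τ j i 2 := by
    intro τ j i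
    rw [← flipRowSeg_one τ]
    refine flipP_flipRowSeg_eq hL1 hL2 τ j i i (fsucc i) fun z => ?_
    have hi : offset i (fsucc i) = 1 := by
      rw [offset_fsucc, offset_self]
      split_ifs <;> omega
    rw [Ne, ← offset_inj (m := i), hi]
    omega
  have row' : ∀ (τ : ConfigP L) (j i : Fin L),
      flipP L (flipP L τ (i, j)) (fpred i, j) = flipRowSeg L τ j (fpred i) 2 := by
    intro τ j i
    rw [← flipRowSeg_one τ]
    refine flipP_flipRowSeg_eq hL1 hL2 τ j i (fpred i) (fpred i) fun z => ?_
    have := offset_lt i z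
    have hi : offset i (fpred i) = L - 1 := by rw [offset_fpred, offset_self, if_pos rfl]
    rw [Ne, ← offset_inj (m := i), hi, offset_fpred_left]
    split_ifs <;> omega
  have H := fun x y => hamP_flipP_flipRowSeg (show 3 ≤ L by omega) le_rfl
    (show 1 < L by omega) hσ r m x y rfl
  rw [flipRowSeg_one] at H
  refine ⟨{(fsucc m, r), (fpred m, r), (m, fsucc r), (m, fpred r)}, {(m, r)},
    {fsucc m, fpred m} ×ˢ {fsucc r, fpred r}, ?_, Finset.card_le_four, ?_, ?_, ?_, ?_, ?_, ?_⟩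
  · rw [Finset.disjoint_singleton_right]
    simp only [Finset.mem_insert, Finset.mem_singleton, Prod.mk.injEq, es, ep, hm, hr.symm,
      hr2.symm, and_true, and_false, or_false]
    omega
  · simp
  · rw [Finset.card_product]
    exact (Nat.mul_le_mul Finset.card_le_two Finset.card_le_two).trans (by norm_num)
  · intro y hy
    simp only [Finset.mem_insert, Finset.mem_singleton] at hy
    rcases hy with rfl | rfl | rfl | rfl
    · exact ⟨σ, hσ, r, m, Or.inl (row _ _ _)⟩
    · exact ⟨σ, hσ, r, _, Or.inl (row' _ _ _)⟩
    · exact ⟨σ, hσ, m, r, Or.inr (by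
        rw [← transposeP_transposeP σ, ← transposeP_flipRowSeg, ← row, flipP_transposeP]
        simp only [flipP_transposeP, transposeP_transposeP, Prod.swap_prod_mk])⟩
    · exact ⟨σ, hσ, m, fpred r, Or.inr (by
        rw [← transposeP_transposeP σ, ← transposeP_flipRowSeg, ← row', flipP_transposeP]
        simp only [flipP_transposeP, transposeP_transposeP, Prod.swap_prod_mk])⟩
  · intro y hy
    rw [Finset.mem_singleton] at hy
    subst hy
    constructor
    · rw [flipP_flipP]
      exact (Rk_zero_iff (by omega)).2 hσ
    · rw [H, if_pos rfl, if_pos (by omega), if_pos (by omega)]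
      norm_num
  · rintro ⟨x, y⟩ hU hD
    simp only [Finset.mem_insert, Finset.mem_singleton, Prod.mk.injEq, es, ep, em] at hU hD
    rw [H]
    by_cases h1 : y = r
    · simp only [h1, and_true] at hU hD
      rw [if_pos h1, if_neg (by omega), if_neg (by omega)]
      norm_num
    · rw [if_neg h1]
      by_cases h2 : y = fsucc r ∨ y = fpred r
      · have hx : offset m x ≠ 0 := by tauto
        rw [if_pos h2]
        by_cases h3 : offset m x + 1 = 1 ∨ offset m x + 1 = L
        · rw [if_pos h3, if_neg (by omega)]
          norm_num
        · rw [if_neg h3]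
          split_ifs <;> norm_num
      · rw [if_neg h2]
        norm_num
  · rintro ⟨x, y⟩ hU hD hB
    simp only [Finset.mem_insert, Finset.mem_singleton, Finset.mem_product, Prod.mk.injEq, es,
      ep, em] at hU hD hB
    rw [H]
    by_cases h1 : y = r
    · simp only [h1, and_true] at hU hD
      rw [if_pos h1, if_neg (by omega), if_neg (by omega)]
      norm_num
    · rw [if_neg h1]
      by_cases h2 : y = fsucc r ∨ y = fpred r
      · simp only [h2, and_true] at hB
        have hx : offset m x ≠ 0 := by tauto
        rw [if_pos h2, if_neg (by omega), if_neg (by omega)]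
        norm_num
      · rw [if_neg h2]

/-! ### Lower bounds for killed semigroups -/

lemma mulVec_le_mulVec_of_nonneg {n : Type*} [Fintype n] {M : Matrix n n ℝ} (hM : ∀ i j, 0 ≤ M i j)
    {f g : n → ℝ} (h : ∀ j, f j ≤ g j) (i : n) : M.mulVec f i ≤ M.mulVec g i :=
  Finset.sum_le_sum fun j _ => mul_le_mul_of_nonneg_left (h j) (hM i j)

section Semigroup

open scoped Matrix.Norms.Operator

variable {n : Type*} [Fintype n] [DecidableEq n]

lemma mexp_eq_exp (A : Matrix n n ℝ) : mexp A = NormedSpace.exp A := by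
  funext i j
  have h := NormedSpace.exp_series_hasSum_exp' (𝕂 := ℝ) A
  have h2 := (h.mapL (LinearMap.toContinuousLinearMap (Matrix.entryLinearMap ℝ ℝ i j)))
  have h3 : HasSum (fun k : ℕ => (Nat.factorial k : ℝ)⁻¹ * (A ^ k) i j)
      (NormedSpace.exp A i j) := h2
  simp only [mexp, div_eq_inv_mul]
  exact h3.tsum_eq

lemma mexp_nonneg_of_nonneg {A : Matrix n n ℝ} (hA : ∀ i j, 0 ≤ A i j) (i j : n) :
    0 ≤ mexp A i j := by
  have hpow : ∀ (k : ℕ) (i j : n), 0 ≤ (A ^ k) i j := by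
    intro k
    induction k with
    | zero =>
      intro i j
      rw [pow_zero, Matrix.one_apply]
      split_ifs <;> norm_num
    | succ k ih =>
      intro i j
      rw [pow_succ, Matrix.mul_apply]
      exact Finset.sum_nonneg fun l _ => mul_nonneg (ih i l) (hA l j)
  exact tsum_nonneg fun k => div_nonneg (hpow k i j) (Nat.cast_nonneg _)

/-- The exponential of a matrix with nonnegative off-diagonal entries is nonnegative. -/
lemma exp_nonneg_of_offDiag_nonneg {A : Matrix n n ℝ} (hA : ∀ i j, i ≠ j → 0 ≤ A i j) (i j : n) :
    0 ≤ NormedSpace.exp A i j := by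
  set c : ℝ := ∑ i, |A i i|
  have hB : ∀ i j, 0 ≤ (A + c • (1 : Matrix n n ℝ)) i j := by
    intro i j
    by_cases h : i = j
    · subst h
      have h1 : |A i i| ≤ c := Finset.single_le_sum (f := fun i => |A i i|)
        (fun _ _ => abs_nonneg _) (Finset.mem_univ i)
      have := neg_abs_le (A i i)
      simp
      linarith
    · simpa [Matrix.one_apply_ne h] using hA i j h
  have hsplit : A = (-c) • (1 : Matrix n n ℝ) + (A + c • (1 : Matrix n n ℝ)) := by
    rw [neg_smul]
    abel
  have hcomm : Commute ((-c) • (1 : Matrix n n ℝ)) (A + c • (1 : Matrix n n ℝ)) :=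
    (Commute.one_left _).smul_left _
  have hscalar : NormedSpace.exp ((-c) • (1 : Matrix n n ℝ)) =
      Real.exp (-c) • (1 : Matrix n n ℝ) := by
    rw [← Algebra.algebraMap_eq_smul_one, ← Algebra.algebraMap_eq_smul_one,
      Real.exp_eq_exp_ℝ]
    exact (NormedSpace.algebraMap_exp_comm (𝔸 := Matrix n n ℝ) (-c)).symm
  rw [hsplit, Matrix.exp_add_of_commute _ _ hcomm, hscalar, smul_one_mul, Matrix.smul_apply,
    ← mexp_eq_exp]
  exact mul_nonneg (Real.exp_pos _).le (mexp_nonneg_of_nonneg hB i j)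

lemma hasDerivAt_exp_smul_mulVec (A : Matrix n n ℝ) (ψ : n → ℝ) (i : n) (s : ℝ) :
    HasDerivAt (fun u : ℝ => (NormedSpace.exp (u • A)).mulVec ψ i)
      ((NormedSpace.exp (s • A)).mulVec (A.mulVec ψ) i) s := by
  have h := hasDerivAt_exp_smul_const (𝕂 := ℝ) A s
  let F : Matrix n n ℝ →ₗ[ℝ] ℝ :=
    { toFun := fun M => M.mulVec ψ i
      map_add' := fun M N => by simp [Matrix.add_mulVec]
      map_smul' := fun c M => by simp [Matrix.smul_mulVec] }
  have h2 := (LinearMap.toContinuousLinearMap F).hasFDerivAt.comp_hasDerivAt s h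
  rw [Matrix.mulVec_mulVec]
  exact h2

/-- If `A` generates a positive semigroup under which `χ` is superharmonic and `φ ≤ χ` is
subharmonic up to an error `δ χ`, then `e^{tA} χ ≥ φ - δ t χ`. -/
theorem le_mexp_smul_mulVec {A : Matrix n n ℝ} (hA : ∀ i j, i ≠ j → 0 ≤ A i j) {χ φ : n → ℝ}
    {δ t : ℝ} (hδ : 0 ≤ δ) (ht : 0 ≤ t) (hφ : ∀ i, φ i ≤ χ i) (hAχ : ∀ i, A.mulVec χ i ≤ 0)
    (hAφ : ∀ i, -δ * χ i ≤ A.mulVec φ i) (i : n) :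
    φ i - δ * t * χ i ≤ (mexp (t • A)).mulVec χ i := by
  rw [mexp_eq_exp]
  have hpos : ∀ s : ℝ, 0 ≤ s → ∀ i j, 0 ≤ NormedSpace.exp (s • A) i j := fun s hs i j =>
    exp_nonneg_of_offDiag_nonneg (fun i j hij => mul_nonneg hs (hA i j hij)) i j
  have hanti : ∀ s : ℝ, 0 ≤ s → (NormedSpace.exp (s • A)).mulVec χ i ≤ χ i := by
    intro s hs
    have hmono : AntitoneOn (fun u : ℝ => (NormedSpace.exp (u • A)).mulVec χ i) (Set.Ici 0) := by
      refine antitoneOn_of_hasDerivWithinAt_nonpos (convex_Ici 0)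
        (fun u _ => (hasDerivAt_exp_smul_mulVec A χ i u).continuousAt.continuousWithinAt)
        (fun u _ => (hasDerivAt_exp_smul_mulVec A χ i u).hasDerivWithinAt) ?_
      intro u hu
      rw [interior_Ici] at hu
      have h := mulVec_le_mulVec_of_nonneg (hpos u (le_of_lt hu)) (g := 0) hAχ i
      rwa [Matrix.mulVec_zero] at h
    have h := hmono (Set.mem_Ici.2 le_rfl) (Set.mem_Ici.2 hs) hs
    simpa using h
  have hmono : MonotoneOn
      (fun u : ℝ => (NormedSpace.exp (u • A)).mulVec φ i + δ * χ i * u) (Set.Ici 0) := by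
    have hd : ∀ u : ℝ, HasDerivAt
        (fun u : ℝ => (NormedSpace.exp (u • A)).mulVec φ i + δ * χ i * u)
        ((NormedSpace.exp (u • A)).mulVec (A.mulVec φ) i + δ * χ i * 1) u := fun u =>
      (hasDerivAt_exp_smul_mulVec A φ i u).add ((hasDerivAt_id u).const_mul _)
    refine monotoneOn_of_hasDerivWithinAt_nonneg (convex_Ici 0)
      (fun u _ => (hd u).continuousAt.continuousWithinAt)
      (fun u _ => (hd u).hasDerivWithinAt) ?_
    intro u hu
    rw [interior_Ici] at hu
    have h := mulVec_le_mulVec_of_nonneg (hpos u (le_of_lt hu)) (f := (-δ) • χ) hAφ i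
    rw [Matrix.mulVec_smul] at h
    have h2 := mul_le_mul_of_nonneg_left (hanti u (le_of_lt hu)) hδ
    simp only [Pi.smul_apply, smul_eq_mul] at h
    linarith
  have h := hmono (Set.mem_Ici.2 le_rfl) (Set.mem_Ici.2 ht) ht
  simp only [zero_smul, NormedSpace.exp_zero, Matrix.one_mulVec, mul_zero, add_zero] at h
  have h2 := mulVec_le_mulVec_of_nonneg (hpos t ht) hφ i
  linarith

end Semigroup

/-! ### The killed generator -/

lemma metroRateP_nonneg (L : ℕ) (β : ℝ) (σ η : ConfigP L) : 0 ≤ metroRateP L β σ η :=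
  le_min zero_le_one (Real.exp_pos _).le

lemma metroRateP_le_one (L : ℕ) (β : ℝ) (σ η : ConfigP L) : metroRateP L β σ η ≤ 1 :=
  min_le_left _ _

lemma metroRateP_le_exp {L : ℕ} {β e : ℝ} (hβ : 0 ≤ β) {σ η : ConfigP L}
    (h : e ≤ hamP L η - hamP L σ) : metroRateP L β σ η ≤ Real.exp (-e * β) :=
  (min_le_right _ _).trans (Real.exp_le_exp.2 (by nlinarith))

lemma metroRateP_eq_one {L : ℕ} {β : ℝ} (hβ : 0 ≤ β) {σ η : ConfigP L}
    (h : hamP L η - hamP L σ ≤ 0) : metroRateP L β σ η = 1 :=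
  min_eq_left (Real.one_le_exp (by nlinarith))

lemma genP_mulVec (L : ℕ) (β : ℝ) (φ : ConfigP L → ℝ) (ζ : ConfigP L) :
    (genP L β).mulVec φ ζ =
      ∑ y, metroRateP L β ζ (flipP L ζ y) * (φ (flipP L ζ y) - φ ζ) := by
  have h : ∀ η, genP L β ζ η =
      (∑ y, if η = flipP L ζ y then metroRateP L β ζ (flipP L ζ y) else 0) -
        if η = ζ then ∑ y, metroRateP L β ζ (flipP L ζ y) else 0 := by
    intro η
    by_cases hη : η = ζ
    · subst hη
      have h0 : ∀ y, η ≠ flipP L η y := fun y => (flipP_ne η y).symm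
      simp [genP, h0]
    · simp [genP, hη]
  simp only [Matrix.mulVec, dotProduct, h, sub_mul, Finset.sum_sub_distrib, Finset.sum_mul,
    ite_mul, zero_mul, mul_sub]
  rw [Finset.sum_comm]
  simp [Finset.sum_ite_eq']

lemma killedGen_mulVec {L : ℕ} (β : ℝ) {φ : ConfigP L → ℝ} (hφ : ∀ η, η ∉ Rset L → φ η = 0)
    {ζ : ConfigP L} (hζ : ζ ∈ Rset L) :
    (killedGen L β).mulVec φ ζ =
      ∑ y, metroRateP L β ζ (flipP L ζ y) * (φ (flipP L ζ y) - φ ζ) := by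
  rw [← genP_mulVec]
  refine Finset.sum_congr rfl fun η _ => ?_
  by_cases hη : η ∈ Rset L
  · simp [killedGen, hζ, hη]
  · simp [hφ η hη]

lemma killedGen_mulVec_of_notMem {L : ℕ} (β : ℝ) (φ : ConfigP L → ℝ)
    {ζ : ConfigP L} (hζ : ζ ∉ Rset L) : (killedGen L β).mulVec φ ζ = 0 :=
  Finset.sum_eq_zero fun η _ => by simp [killedGen, hζ]

lemma killedGen_offDiag_nonneg (L : ℕ) (β : ℝ) (σ η : ConfigP L) (h : σ ≠ η) :
    0 ≤ killedGen L β σ η := by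
  unfold killedGen genP
  split_ifs with h1 h2
  · exact absurd h2.symm h
  · refine Finset.sum_nonneg fun y _ => ?_
    split_ifs
    · exact metroRateP_nonneg _ _ _ _
    · exact le_rfl
  · exact le_rfl

/-! ### The Lyapunov function -/

/-- The least length of a segment producing `ζ` from a ground state. -/
def segLength {L : ℕ} (ζ : ConfigP L) : ℕ := sInf {k | ζ ∈ Rk L k}

lemma segLength_le {L k : ℕ} {ζ : ConfigP L} (h : ζ ∈ Rk L k) : segLength ζ ≤ k := Nat.sInf_le h

lemma mem_Rk_segLength {L : ℕ} {ζ : ConfigP L} (h : ζ ∈ Rset L) : ζ ∈ Rk L (segLength ζ) := by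
  obtain ⟨k, _, hk⟩ := h
  exact Nat.sInf_mem (s := {k | ζ ∈ Rk L k}) ⟨k, hk⟩

lemma segLength_add_two_le {L : ℕ} (hL : 3 ≤ L) {ζ : ConfigP L} (h : ζ ∈ Rset L) :
    segLength ζ + 2 ≤ L := by
  obtain ⟨k, hkL, hk⟩ := h
  rcases (show k + 2 ≤ L ∨ k = L - 1 ∨ k = L by omega) with h | rfl | rfl
  · have := segLength_le hk
    omega
  · have := segLength_le (Rk_pred_full_subset hk)
    omega
  · have := segLength_le (Rk_full_subset (by omega) hk)
    omega

/-- The Lyapunov function of the segment length. -/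
def lyap (L k : ℕ) : ℝ := if k = 0 then 0 else k * (2 * L - k) + 6 * L

lemma lyap_mono {L i j : ℕ} (hij : i ≤ j) (hj : j ≤ L) : lyap L i ≤ lyap L j := by
  have h1 : (i : ℝ) ≤ j := by exact_mod_cast hij
  have h2 : (j : ℝ) ≤ L := by exact_mod_cast hj
  have h3 : (0 : ℝ) ≤ i := Nat.cast_nonneg i
  unfold lyap
  split_ifs with hi hj0
  · exact le_rfl
  · nlinarith
  · omega
  · nlinarith

lemma lyap_nonneg {L k : ℕ} (hk : k ≤ L) : 0 ≤ lyap L k := by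
  have h := lyap_mono (Nat.zero_le k) hk
  rwa [lyap, if_pos rfl] at h

lemma lyap_le {L k : ℕ} (hL : 1 ≤ L) (hk : k ≤ L) : lyap L k ≤ 7 * (L : ℝ) ^ 2 := by
  refine (lyap_mono hk le_rfl).trans ?_
  have h1 : (1 : ℝ) ≤ L := by exact_mod_cast hL
  rw [lyap, if_neg (by omega)]
  nlinarith

lemma lyap_one (L : ℕ) : lyap L 1 = 8 * L - 1 := by
  rw [lyap, if_neg one_ne_zero]
  push_cast
  ring

lemma lyap_drift_one (L : ℕ) :
    3 ≤ 1 * (lyap L 1 - lyap L 0) - 4 * (lyap L 2 - lyap L 1) := by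
  rw [lyap_one]
  simp only [lyap, if_true, if_neg two_ne_zero]
  push_cast
  linarith

lemma lyap_drift {L k : ℕ} (hk : 2 ≤ k) :
    3 ≤ 2 * (lyap L k - lyap L (k - 1)) - 2 * (lyap L (k + 1) - lyap L k) := by
  obtain ⟨j, rfl⟩ := Nat.exists_eq_add_of_le hk
  rw [show 2 + j - 1 = j + 1 by omega]
  unfold lyap
  rw [if_neg (by omega), if_neg (by omega), if_neg (by omega)]
  push_cast
  linarith

/-- The subharmonic function `1 - ε V` on `ℛ`, extended by zero. -/
def subharm (L : ℕ) (ε : ℝ) (ζ : ConfigP L) : ℝ :=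
  if ζ ∈ Rset L then 1 - ε * lyap L (segLength ζ) else 0

lemma subharm_le {L : ℕ} (hL : 3 ≤ L) {ε : ℝ} (hε : 0 ≤ ε) (ζ : ConfigP L) :
    subharm L ε ζ ≤ if ζ ∈ Rset L then 1 else 0 := by
  unfold subharm
  split_ifs with h
  · have := segLength_add_two_le hL h
    have := mul_nonneg hε (lyap_nonneg (show segLength ζ ≤ L by omega))
    linarith
  · exact le_rfl

lemma subharm_nonneg {L : ℕ} (hL : 3 ≤ L) {ε : ℝ} (hε : 0 ≤ ε) (hεL : ε * (7 * (L : ℝ) ^ 2) ≤ 1)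
    (ζ : ConfigP L) : 0 ≤ subharm L ε ζ := by
  unfold subharm
  split_ifs with h
  · have := segLength_add_two_le hL h
    have := mul_le_mul_of_nonneg_left
      (lyap_le (show 1 ≤ L by omega) (show segLength ζ ≤ L by omega)) hε
    linarith
  · exact le_rfl

lemma le_subharm {L k : ℕ} {ε : ℝ} (hε : 0 ≤ ε) (hk : k ≤ L) {ζ : ConfigP L} (h : ζ ∈ Rk L k) :
    1 - ε * lyap L k ≤ subharm L ε ζ := by
  rw [subharm, if_pos ⟨k, hk, h⟩]
  have := mul_le_mul_of_nonneg_left (lyap_mono (segLength_le h) hk) hε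
  linarith

lemma LocalMoves.drift_nonneg {L : ℕ} (hL : 3 ≤ L) {β ε : ℝ} (hβ : 0 ≤ β)
    (hε : ε = 3 * Real.exp (-2 * β)) (hεL : ε * (7 * (L : ℝ) ^ 2) ≤ 1)
    (hLβ : (L : ℝ) ^ 2 * Real.exp (-4 * β) ≤ Real.exp (-2 * β)) {ζ : ConfigP L}
    (hζ : ζ ∈ Rset L) {u d : ℕ} (h : LocalMoves L ζ (segLength ζ) u d)
    (hd : 3 ≤ d * (lyap L (segLength ζ) - lyap L (segLength ζ - 1)) -
      u * (lyap L (segLength ζ + 1) - lyap L (segLength ζ))) :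
    0 ≤ ∑ y, metroRateP L β ζ (flipP L ζ y) * (subharm L ε (flipP L ζ y) - subharm L ε ζ) := by
  have hk := segLength_add_two_le hL hζ
  have hφ : subharm L ε ζ = 1 - ε * lyap L (segLength ζ) := by rw [subharm, if_pos hζ]
  set k := segLength ζ
  obtain ⟨U, D, B, hUD, hU, hD, hB, h1, h2, h3, h4⟩ := h
  set r2 := Real.exp (-2 * β)
  set r4 := Real.exp (-4 * β)
  have hr2 : 0 < r2 := Real.exp_pos _
  have hr4 : 0 < r4 := Real.exp_pos _
  have hε0 : 0 ≤ ε := by rw [hε]; positivity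
  set a := ε * (lyap L k - lyap L (k - 1))
  set b := ε * (lyap L (k + 1) - lyap L k)
  have ha : 0 ≤ a := mul_nonneg hε0 (sub_nonneg.2 (lyap_mono (by omega) (by omega)))
  have hb : 0 ≤ b := mul_nonneg hε0 (sub_nonneg.2 (lyap_mono (by omega) (by omega)))
  have hterm : ∀ y, (if y ∈ D then a else 0) - (if y ∈ U then b else 0) -
      (if y ∈ B then r2 else 0) - r4 ≤
      metroRateP L β ζ (flipP L ζ y) * (subharm L ε (flipP L ζ y) - subharm L ε ζ) := by
    intro y
    have hB0 : 0 ≤ if y ∈ B then r2 else 0 := by split_ifs <;> linarith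
    have hrate := metroRateP_nonneg L β ζ (flipP L ζ y)
    have hrate1 := metroRateP_le_one L β ζ (flipP L ζ y)
    by_cases hyD : y ∈ D
    · have hyU : y ∉ U := fun hyU => Finset.disjoint_left.1 hUD hyU hyD
      have hle := le_subharm hε0 (show k - 1 ≤ L by omega) (h2 y hyD).1
      rw [if_pos hyD, if_neg hyU, metroRateP_eq_one hβ (h2 y hyD).2, hφ]
      simp only [a]
      linarith
    · by_cases hyU : y ∈ U
      · have hle := le_subharm hε0 (show k + 1 ≤ L by omega) (h1 y hyU)
        have hdiff : -b ≤ subharm L ε (flipP L ζ y) - subharm L ε ζ := by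
          rw [hφ]
          simp only [b]
          linarith
        rw [if_neg hyD, if_pos hyU]
        nlinarith [mul_le_mul_of_nonneg_left hdiff hrate, mul_le_mul_of_nonneg_right hrate1 hb]
      · have hdiff : -1 ≤ subharm L ε (flipP L ζ y) - subharm L ε ζ := by
          have e1 := subharm_nonneg hL hε0 hεL (flipP L ζ y)
          have e2 := subharm_le hL hε0 ζ
          rw [if_pos hζ] at e2
          linarith
        have hdiff' := mul_le_mul_of_nonneg_left hdiff hrate
        rw [if_neg hyD, if_neg hyU]
        by_cases hyB : y ∈ B
        · have hr := metroRateP_le_exp hβ (h3 y hyU hyD)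
          rw [if_pos hyB]
          change _ ≤ r2 at hr
          linarith
        · have hr := metroRateP_le_exp hβ (h4 y hyU hyD hyB)
          rw [if_neg hyB]
          change _ ≤ r4 at hr
          linarith
  refine le_trans ?_ (Finset.sum_le_sum fun y _ => hterm y)
  simp only [Finset.sum_sub_distrib, Finset.sum_ite_mem, Finset.univ_inter, Finset.sum_const,
    nsmul_eq_mul, Finset.card_univ, Fintype.card_prod, Fintype.card_fin]
  have cD : (d : ℝ) * a ≤ D.card * a := mul_le_mul_of_nonneg_right (by exact_mod_cast hD) ha
  have cU : (U.card : ℝ) * b ≤ u * b := mul_le_mul_of_nonneg_right (by exact_mod_cast hU) hb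
  have cB : (B.card : ℝ) * r2 ≤ 8 * r2 :=
    mul_le_mul_of_nonneg_right (by exact_mod_cast hB) hr2.le
  have hmain : 9 * r2 ≤ d * a - u * b := by
    have := mul_le_mul_of_nonneg_left hd hε0
    simp only [a, b]
    rw [hε] at this ⊢
    linarith
  push_cast
  nlinarith

lemma flipP_mem_Rk_one {L : ℕ} {σ : ConfigP L} (hσ : σ ∈ GroundP L) (y : Fin L × Fin L) :
    flipP L σ y ∈ Rk L 1 := Rk_one_iff.2 ⟨σ, hσ, y, rfl⟩

lemma subharm_ground {L : ℕ} (hL : 0 < L) (ε : ℝ) {σ : ConfigP L} (hσ : σ ∈ GroundP L) :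
    subharm L ε σ = 1 := by
  have h0 := (Rk_zero_iff hL).2 hσ
  rw [subharm, if_pos ⟨0, Nat.zero_le _, h0⟩, Nat.le_zero.1 (segLength_le h0), lyap, if_pos rfl]
  ring

lemma drift_ground {L : ℕ} (hL : 2 ≤ L) {β ε : ℝ} (hβ : 0 ≤ β) (hε : 0 ≤ ε)
    {σ : ConfigP L} (hσ : σ ∈ GroundP L) :
    -(8 * ε * (L : ℝ) ^ 3 * Real.exp (-4 * β)) ≤
      ∑ y, metroRateP L β σ (flipP L σ y) * (subharm L ε (flipP L σ y) - subharm L ε σ) := by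
  have hterm : ∀ y, -(8 * ε * L * Real.exp (-4 * β)) ≤
      metroRateP L β σ (flipP L σ y) * (subharm L ε (flipP L σ y) - subharm L ε σ) := by
    intro y
    have h1 := le_subharm hε (show 1 ≤ L by omega) (flipP_mem_Rk_one hσ y)
    rw [lyap_one] at h1
    have h2 : -(8 * ε * L) ≤ subharm L ε (flipP L σ y) - subharm L ε σ := by
      rw [subharm_ground (by omega) ε hσ]
      linarith
    have h3 := metroRateP_le_exp hβ (hamP_flipP_ground hL hσ y).ge
    have h4 := metroRateP_nonneg L β σ (flipP L σ y)
    have h5 : 0 ≤ 8 * ε * L := by positivity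
    linarith [mul_le_mul_of_nonneg_left h2 h4, mul_le_mul_of_nonneg_right h3 h5]
  refine le_trans (le_of_eq ?_) (Finset.sum_le_sum fun y _ => hterm y)
  simp only [Finset.sum_const, nsmul_eq_mul, Finset.card_univ, Fintype.card_prod, Fintype.card_fin]
  push_cast
  ring

lemma localMoves_of_mem_Rk_one {L : ℕ} (hL : 4 ≤ L) {ζ : ConfigP L} (hζ : ζ ∈ Rk L 1) :
    LocalMoves L ζ 1 4 1 := by
  obtain ⟨σ, hσ, y, rfl⟩ := Rk_one_iff.1 hζ
  exact localMoves_flipP hL hσ y.1 y.2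

lemma localMoves_of_two_le {L k : ℕ} (hk2 : 2 ≤ k) (hk : k + 2 ≤ L) {ζ : ConfigP L}
    (hζ : ζ ∈ Rk L k) : LocalMoves L ζ k 2 2 := by
  obtain ⟨σ, hσ, i, m, rfl | rfl⟩ := hζ
  · exact localMoves_flipRowSeg hk2 hk hσ i m
  · exact (localMoves_flipRowSeg hk2 hk (transposeP_mem_GroundP hσ) i m).transposeP

/-- The drift of `1 - ε V` is bounded below on all of `ℛ`. -/
lemma drift_lower_bound {L : ℕ} (hL : 4 ≤ L) {β ε : ℝ} (hβ : 0 ≤ β)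
    (hε : ε = 3 * Real.exp (-2 * β)) (hεL : ε * (7 * (L : ℝ) ^ 2) ≤ 1)
    (hLβ : (L : ℝ) ^ 2 * Real.exp (-4 * β) ≤ Real.exp (-2 * β)) {ζ : ConfigP L}
    (hζ : ζ ∈ Rset L) :
    -(8 * ε * (L : ℝ) ^ 3 * Real.exp (-4 * β)) ≤
      ∑ y, metroRateP L β ζ (flipP L ζ y) * (subharm L ε (flipP L ζ y) - subharm L ε ζ) := by
  have hε0 : 0 ≤ ε := by rw [hε]; positivity
  have hneg : -(8 * ε * (L : ℝ) ^ 3 * Real.exp (-4 * β)) ≤ 0 := neg_nonpos.2 (by positivity)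
  have hmem := mem_Rk_segLength hζ
  have hlen := segLength_add_two_le (by omega) hζ
  rcases (show segLength ζ = 0 ∨ segLength ζ = 1 ∨ 2 ≤ segLength ζ by omega) with h | h | h
  · rw [h] at hmem
    exact drift_ground (by omega) hβ hε0 ((Rk_zero_iff (by omega)).1 hmem)
  · have hm : LocalMoves L ζ (segLength ζ) 4 1 := by
      rw [h] at hmem ⊢
      exact localMoves_of_mem_Rk_one hL hmem
    refine hneg.trans (hm.drift_nonneg (by omega) hβ hε hεL hLβ hζ ?_)
    rw [h]
    exact_mod_cast lyap_drift_one L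
  · refine hneg.trans ((localMoves_of_two_le h hlen hmem).drift_nonneg (by omega) hβ hε hεL hLβ
      hζ ?_)
    exact_mod_cast lyap_drift h

/-- The probability of leaving `ℛ` before time `t`, started from a ground state. -/
theorem escape_le {L : ℕ} (hL : 4 ≤ L) {β t : ℝ} (hβ : 0 ≤ β) (ht : 0 ≤ t)
    (hεL : 21 * (L : ℝ) ^ 2 * Real.exp (-2 * β) ≤ 1) {σ : ConfigP L} (hσ : σ ∈ GroundP L) :
    1 - ((mexp (t • killedGen L β)).mulVec (fun η => if η ∈ Rset L then (1 : ℝ) else 0)) σ ≤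
      24 * (L : ℝ) ^ 3 * Real.exp (-6 * β) * t := by
  have h2 : 0 < Real.exp (-2 * β) := Real.exp_pos _
  have h4 : Real.exp (-4 * β) = Real.exp (-2 * β) * Real.exp (-2 * β) := by
    rw [← Real.exp_add]
    ring_nf
  have h6 : Real.exp (-6 * β) = Real.exp (-2 * β) * Real.exp (-4 * β) := by
    rw [← Real.exp_add]
    ring_nf
  have hLβ : (L : ℝ) ^ 2 * Real.exp (-4 * β) ≤ Real.exp (-2 * β) := by
    rw [h4]
    nlinarith [sq_nonneg (L : ℝ)]
  obtain ⟨ε, hε⟩ : ∃ ε, ε = 3 * Real.exp (-2 * β) := ⟨_, rfl⟩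
  have hε0 : 0 ≤ ε := by rw [hε]; positivity
  have hεL' : ε * (7 * (L : ℝ) ^ 2) ≤ 1 := by
    rw [hε]
    linarith
  have hR : σ ∈ Rset L := ⟨0, Nat.zero_le _, (Rk_zero_iff (by omega)).2 hσ⟩
  have key := le_mexp_smul_mulVec (A := killedGen L β) (killedGen_offDiag_nonneg L β)
    (χ := fun η => if η ∈ Rset L then (1 : ℝ) else 0) (φ := subharm L ε)
    (δ := 8 * ε * (L : ℝ) ^ 3 * Real.exp (-4 * β)) (by positivity) ht
    (fun ζ => subharm_le (by omega) hε0 ζ) ?_ ?_ σ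
  · rw [subharm_ground (by omega) ε hσ] at key
    simp only [if_pos hR, mul_one] at key
    rw [h6]
    rw [hε] at key
    linarith
  · intro ζ
    by_cases hζ : ζ ∈ Rset L
    · rw [killedGen_mulVec β (fun η hη => if_neg hη) hζ]
      refine Finset.sum_nonpos fun y _ =>
        mul_nonpos_of_nonneg_of_nonpos (metroRateP_nonneg _ _ _ _) ?_
      rw [if_pos hζ]
      split_ifs <;> norm_num
    · exact (killedGen_mulVec_of_notMem β _ hζ).le
  · intro ζ
    by_cases hζ : ζ ∈ Rset L
    · rw [killedGen_mulVec β (φ := subharm L ε) (fun η hη => if_neg hη) hζ]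
      simp only [if_pos hζ, mul_one]
      exact drift_lower_bound hL hβ hε hεL' hLβ hζ
    · rw [killedGen_mulVec_of_notMem β _ hζ, if_neg hζ, mul_zero]

end SPMP

open SPMP

/-- Corollary `cor:noescape`, no escape from `ℛ` on the relevant timescale:
started from a ground state, the probability of leaving `ℛ` before time `β²e^{4β}` is
`O(e^{-β/4})`; in matrix form, `1 - (e^{t𝓛_ℛ}𝟙_ℛ)(σ) ≤ C e^{-β/4}` for `t = β²e^{4β}`. -/
theorem no_escape_from_R :
    ∃ C β₀ : ℝ, 0 < C ∧ ∀ β : ℝ, β₀ ≤ β →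
      ∀ σ ∈ GroundP (Lc β),
        1 - ((mexp ((β ^ 2 * Real.exp (4 * β)) • killedGen (Lc β) β)).mulVec
              (fun η => if η ∈ Rset (Lc β) then (1 : ℝ) else 0)) σ ≤
          C * Real.exp (-β / 4) := by
  refine ⟨1536, 20, by norm_num, fun β hβ σ hσ => ?_⟩
  have hβ0 : 0 ≤ β := by linarith
  have hL : 4 ≤ Lc β := by
    refine Nat.le_floor ?_
    have := Real.add_one_le_exp (β / 2)
    push_cast
    linarith
  have hLle : (Lc β : ℝ) ≤ Real.exp (β / 2) := Nat.floor_le (Real.exp_pos _).le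
  have hL0 : (0 : ℝ) ≤ Lc β := Nat.cast_nonneg _
  have hL2 : (Lc β : ℝ) ^ 2 ≤ Real.exp β := by
    refine (pow_le_pow_left₀ hL0 hLle 2).trans (le_of_eq ?_)
    rw [← Real.exp_nat_mul]
    push_cast
    ring_nf
  have hL3 : (Lc β : ℝ) ^ 3 ≤ Real.exp (3 * β / 2) := by
    refine (pow_le_pow_left₀ hL0 hLle 3).trans (le_of_eq ?_)
    rw [← Real.exp_nat_mul]
    push_cast
    ring_nf
  have hsmall : 21 * (Lc β : ℝ) ^ 2 * Real.exp (-2 * β) ≤ 1 := by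
    have h1 : Real.exp β * Real.exp (-2 * β) = Real.exp (-β) := by
      rw [← Real.exp_add]
      ring_nf
    have h2 : 21 * Real.exp (-β) ≤ Real.exp β * Real.exp (-β) :=
      mul_le_mul_of_nonneg_right (by linarith [Real.add_one_le_exp β]) (Real.exp_pos _).le
    rw [← Real.exp_add, add_neg_cancel, Real.exp_zero] at h2
    have h3 := mul_le_mul_of_nonneg_right hL2 (Real.exp_pos (-2 * β)).le
    linarith
  refine (escape_le hL hβ0 (by positivity) hsmall hσ).trans ?_
  have hsq : β ^ 2 ≤ 64 * Real.exp (β / 4) := by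
    have h1 := Real.add_one_le_exp (β / 8)
    have h2 : Real.exp (β / 4) = Real.exp (β / 8) ^ 2 := by
      rw [← Real.exp_nat_mul]
      push_cast
      ring_nf
    rw [h2]
    nlinarith
  calc 24 * (Lc β : ℝ) ^ 3 * Real.exp (-6 * β) * (β ^ 2 * Real.exp (4 * β))
      ≤ 24 * Real.exp (3 * β / 2) * Real.exp (-6 * β) *
          (64 * Real.exp (β / 4) * Real.exp (4 * β)) := by gcongr
    _ = 1536 * (Real.exp (3 * β / 2) * Real.exp (-6 * β) * Real.exp (β / 4) *
          Real.exp (4 * β)) := by ring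
    _ = 1536 * Real.exp (-β / 4) := by
        rw [← Real.exp_add, ← Real.exp_add, ← Real.exp_add]
        ring_nf

end
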